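/- Let L be a symmetric positive semidefinite real n×n matrix such that I − L is also positive semidefinite, let P = I − L, and let E(H) = trace(Hᵀ L H). Let λ₀ be a real number with 0 < λ₀ ≤ 1 such that every nonzero eigenvalue of L is at least λ₀. Then for every real n×d matrix X and every natural number l, trace(Xᵀ L P^l X) ≤ (1 − λ₀)^l · E(X). -/

import Mathlib

open Matrix BigOperators

/-! On the spectrum of `L` the scalar inequality `x (1 - x) ^ l ≤ x (1 - λ₀) ^ l` holds: both sides
vanish at `x = 0`, and elsewhere `λ₀ ≤ x ≤ 1`. The functional calculus turns it into
`L P ^ l ≤ (1 - λ₀) ^ l L` in the Loewner order, and `A ↦ trace (Xᵀ A X)` is monotone for that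
order. -/

theorem mul_one_sub_pow_le_mul_one_sub_pow {R : Type*} [Ring R] [PartialOrder R]
    [IsOrderedRing R] {x c : R} (hx₀ : 0 ≤ x) (hx₁ : x ≤ 1) (hc : x ≠ 0 → c ≤ x) (l : ℕ) :
    x * (1 - x) ^ l ≤ x * (1 - c) ^ l := by
  obtain rfl | hx := eq_or_ne x 0
  · simp
  · have h : 1 - x ≤ 1 - c := sub_le_sub_left (hc hx) 1
    exact mul_le_mul_of_nonneg_left (pow_le_pow_left₀ (sub_nonneg.2 hx₁) h l) hx₀

section FunctionalCalculus

open Polynomial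

theorem aeval_le_aeval_of_eval_le {R A : Type*} {p : A → Prop} [CommSemiring R] [PartialOrder R]
    [StarRing R] [MetricSpace R] [IsTopologicalSemiring R] [ContinuousStar R] [ContinuousSqrt R]
    [StarOrderedRing R] [TopologicalSpace A] [Ring A] [StarRing A] [PartialOrder A]
    [StarOrderedRing A] [Algebra R A] [ContinuousFunctionalCalculus R A p] {a : A} (ha : p a)
    {f g : R[X]} (hfg : ∀ x ∈ spectrum R a, f.eval x ≤ g.eval x) :
    aeval a f ≤ aeval a g := by
  rw [← cfc_polynomial f a, ← cfc_polynomial g a]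
  exact cfc_mono hfg

theorem mul_one_sub_pow_le_smul {A : Type*} [TopologicalSpace A] [Ring A] [StarRing A]
    [PartialOrder A] [StarOrderedRing A] [Algebra ℝ A]
    [ContinuousFunctionalCalculus ℝ A IsSelfAdjoint] [NonnegSpectrumClass ℝ A] {a : A}
    (ha₀ : 0 ≤ a) (ha₁ : a ≤ 1) {c : ℝ} (hc : ∀ x ∈ spectrum ℝ a, x ≠ 0 → c ≤ x) (l : ℕ) :
    a * (1 - a) ^ l ≤ (1 - c) ^ l • a := by
  have h : aeval a (X * (1 - X) ^ l : ℝ[X]) ≤ aeval a ((1 - c) ^ l • X : ℝ[X]) := by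
    refine aeval_le_aeval_of_eval_le ha₀.isSelfAdjoint fun x hx ↦ ?_
    have hx₀ : 0 ≤ x := spectrum_nonneg_of_nonneg ha₀ hx
    have hx₁ : x ≤ 1 := (CFC.le_one_iff a).1 ha₁ x hx
    simpa [mul_comm ((1 - c) ^ l)] using
      mul_one_sub_pow_le_mul_one_sub_pow hx₀ hx₁ (hc x hx) l
  simpa using h

end FunctionalCalculus

section Trace

open scoped ComplexOrder MatrixOrder

variable {𝕜 m n : Type*} [RCLike 𝕜] [Fintype m] [Fintype n]

theorem trace_conjTranspose_mul_mul_mono (X : Matrix n m 𝕜) :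
    Monotone fun A : Matrix n n 𝕜 ↦ (Xᴴ * A * X).trace := by
  intro A B hAB
  have h : 0 ≤ (Xᴴ * (B - A) * X).trace := (hAB.conjTranspose_mul_mul_same X).trace_nonneg
  rwa [Matrix.mul_sub, Matrix.sub_mul, trace_sub, sub_nonneg] at h

theorem cross_term_le_scaled_energy_general [DecidableEq n] {L : Matrix n n 𝕜}
    (hL : L.PosSemidef) (hIL : (1 - L).PosSemidef) {c : ℝ}
    (hc : ∀ μ ∈ spectrum ℝ L, μ ≠ 0 → c ≤ μ) (X : Matrix n m 𝕜) (l : ℕ) :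
    (Xᴴ * L * ((1 - L) ^ l * X)).trace ≤ (1 - c) ^ l • (Xᴴ * L * X).trace :=
  calc
    (Xᴴ * L * ((1 - L) ^ l * X)).trace = (Xᴴ * (L * (1 - L) ^ l) * X).trace := by
      simp only [Matrix.mul_assoc]
    _ ≤ (Xᴴ * ((1 - c) ^ l • L) * X).trace :=
      trace_conjTranspose_mul_mul_mono X <|
        mul_one_sub_pow_le_smul hL.nonneg (le_iff.2 hIL) hc l
    _ = (1 - c) ^ l • (Xᴴ * L * X).trace := by
      rw [Matrix.mul_smul, Matrix.smul_mul, trace_smul]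

end Trace

/-- `trace(Xᵀ L P^l X) ≤ (1 − λ₀)^l · E(X)` when `L` and `I − L` are PSD,
`P = I − L`, and every nonzero eigenvalue of `L` is at least `λ₀ ∈ (0,1]`. -/
theorem cross_term_le_scaled_energy (n d : ℕ) (L : Matrix (Fin n) (Fin n) ℝ)
    (hL : L.PosSemidef) (hIL : ((1 : Matrix (Fin n) (Fin n) ℝ) - L).PosSemidef)
    (P : Matrix (Fin n) (Fin n) ℝ) (hP : P = 1 - L)
    (lam0 : ℝ) (hlam0 : 0 < lam0) (hlam1 : lam0 ≤ 1)
    (hspec : ∀ μ ∈ spectrum ℝ L, μ ≠ 0 → lam0 ≤ μ)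
    (X : Matrix (Fin n) (Fin d) ℝ) (l : ℕ) :
    (Xᵀ * L * (P ^ l * X)).trace ≤ (1 - lam0) ^ l * (Xᵀ * L * X).trace := by
  subst hP
  simpa using cross_term_le_scaled_energy_general hL hIL hspec X l
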